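/- arXiv:2404.17741 — 2 statements merged into one kernel-verified Lean document; each statement's English description precedes it below -/
import Mathlib

section
/- Let P be a Poisson (2-3)-algebra over a field F, let A be a subalgebra of P and let B be an ideal of P. Then AB, the F-subspace of P generated by the set {ab : a ∈ A, b ∈ B}, is a subalgebra of P. -/
/-- A Poisson (2-3)-algebra structure: the (possibly non-unital) commutative
associative `F`-algebra `P` carries an `F`-trilinear, alternating bracket
satisfying the fundamental identity and the Leibniz (2-3)-identity. -/
structure IsPoisson23 (F : Type*) [Field F] {P : Type*} [NonUnitalCommRing P]
    [Module F P] [SMulCommClass F P P] [IsScalarTower F P P]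
    (br : P → P → P → P) : Prop where
  add_fst : ∀ a₁ a₂ b c, br (a₁ + a₂) b c = br a₁ b c + br a₂ b c
  add_snd : ∀ a b₁ b₂ c, br a (b₁ + b₂) c = br a b₁ c + br a b₂ c
  add_trd : ∀ a b c₁ c₂, br a b (c₁ + c₂) = br a b c₁ + br a b c₂
  smul_fst : ∀ (l : F) (a b c : P), br (l • a) b c = l • br a b c
  smul_snd : ∀ (l : F) (a b c : P), br a (l • b) c = l • br a b c
  smul_trd : ∀ (l : F) (a b c : P), br a b (l • c) = l • br a b c
  alternating : ∀ a b c, a = b ∨ b = c ∨ a = c → br a b c = 0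
  fundamental : ∀ a₁ a₂ a₃ b c,
    br (br a₁ a₂ a₃) b c =
      br (br a₁ b c) a₂ a₃ + br a₁ (br a₂ b c) a₃ + br a₁ a₂ (br a₃ b c)
  leibniz : ∀ a₁ a₂ b c, br (a₁ * a₂) b c = a₂ * br a₁ b c + a₁ * br a₂ b c

variable {F P : Type*} [Field F] [NonUnitalCommRing P]
  [Module F P] [SMulCommClass F P P] [IsScalarTower F P P]

/-- A subalgebra of a Poisson (2-3)-algebra: an `F`-subspace closed under the
product and the ternary bracket. -/
def IsSubalgebra (br : P → P → P → P) (S : Submodule F P) : Prop :=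
  (∀ a ∈ S, ∀ b ∈ S, a * b ∈ S) ∧ (∀ a ∈ S, ∀ b ∈ S, ∀ c ∈ S, br a b c ∈ S)

/-- An ideal of a Poisson (2-3)-algebra: an `F`-subspace `I` with `ab ∈ I` and
`[a,b,c] ∈ I` for all `a ∈ I` and `b, c ∈ P`. -/
def IsIdeal (br : P → P → P → P) (I : Submodule F P) : Prop :=
  (∀ a ∈ I, ∀ b : P, a * b ∈ I) ∧ (∀ a ∈ I, ∀ b c : P, br a b c ∈ I)

/- To put elements of `AB` in every slot of the bracket, start from slots in `A` and move them to
`AB` one at a time. With the other slots fixed, the bracket is a derivation `d` of the remaining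
one. It maps `B` into itself, and `b * d a ∈ AB`: either `d a ∈ A`, or `d a ∈ AB` by the previous
step and `AB` is stable under multiplication by the whole algebra. Hence
`d (a * b) = b * d a + a * d b` lies in `AB`. -/

open Function

section Multiderivation

variable {R Q ι : Type*} [CommSemiring R] [NonUnitalCommSemiring Q] [Module R Q]

/-- The submodule `AB` spanned by the products of elements of `A` and elements of `B`. Mathlib's
product of submodules is only available in unital algebras. -/
def spanMul (A B : Submodule R Q) : Submodule R Q :=
  Submodule.span R {x : Q | ∃ a ∈ A, ∃ b ∈ B, x = a * b}

/-- A linear endomorphism of a possibly non-unital commutative algebra satisfying the Leibniz rule;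
Mathlib's `Derivation` requires a unital algebra. -/
def IsDerivation (d : Q →ₗ[R] Q) : Prop :=
  ∀ x y, d (x * y) = y * d x + x * d y

/-- A multilinear bracket that is a derivation in each slot separately, as are the brackets of
Poisson algebras of any arity. -/
def IsMultiderivation [DecidableEq ι] (f : MultilinearMap R (fun _ : ι => Q) Q) : Prop :=
  ∀ m i, IsDerivation (f.toLinearMap m i)

variable {A B : Submodule R Q}

theorem mul_mem_spanMul {a b : Q} (ha : a ∈ A) (hb : b ∈ B) : a * b ∈ spanMul A B :=
  Submodule.subset_span ⟨a, ha, b, hb, rfl⟩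

theorem spanMul_le {S : Submodule R Q} : spanMul A B ≤ S ↔ ∀ a ∈ A, ∀ b ∈ B, a * b ∈ S := by
  refine ⟨fun h a ha b hb => h (mul_mem_spanMul ha hb), fun h => Submodule.span_le.2 ?_⟩
  rintro _ ⟨a, ha, b, hb, rfl⟩
  exact h a ha b hb

theorem spanMul_mul_mem [IsScalarTower R Q Q] (hB : ∀ b ∈ B, ∀ q, b * q ∈ B) {x : Q}
    (hx : x ∈ spanMul A B) (q : Q) : x * q ∈ spanMul A B := by
  suffices h : spanMul A B ≤ (spanMul A B).comap (LinearMap.mulRight R q) from h hx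
  refine spanMul_le.2 fun a ha b hb => ?_
  rw [Submodule.mem_comap, LinearMap.mulRight_apply, mul_assoc]
  exact mul_mem_spanMul ha (hB b hb q)

theorem IsDerivation.apply_mem_spanMul {d : Q →ₗ[R] Q} (hd : IsDerivation d)
    (hdB : ∀ b ∈ B, d b ∈ B) (hdA : ∀ a ∈ A, ∀ b ∈ B, b * d a ∈ spanMul A B) {x : Q}
    (hx : x ∈ spanMul A B) : d x ∈ spanMul A B := by
  suffices h : spanMul A B ≤ (spanMul A B).comap d from h hx
  refine spanMul_le.2 fun a ha b hb => ?_
  rw [Submodule.mem_comap, hd]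
  exact add_mem (hdA a ha b hb) (mul_mem_spanMul ha (hdB b hb))

theorem IsMultiderivation.apply_mem_spanMul [DecidableEq ι] [IsScalarTower R Q Q]
    {f : MultilinearMap R (fun _ : ι => Q) Q} (hf : IsMultiderivation f)
    (hA : ∀ m, (∀ i, m i ∈ A) → f m ∈ A) (hBmul : ∀ b ∈ B, ∀ q, b * q ∈ B)
    (hBf : ∀ m i, m i ∈ B → f m ∈ B) {s : Finset ι} (hs : s.Nonempty) {m : ι → Q}
    (hmem : ∀ i ∈ s, m i ∈ spanMul A B) (hnotMem : ∀ i ∉ s, m i ∈ A) : f m ∈ spanMul A B := by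
  induction s using Finset.induction generalizing m with
  | empty => exact absurd hs Finset.not_nonempty_empty
  | insert i s hi ih =>
    have hdB : ∀ b ∈ B, f (update m i b) ∈ B := fun b hb =>
      hBf _ i (by rwa [update_self])
    have hdA : ∀ a ∈ A, ∀ b ∈ B, b * f (update m i a) ∈ spanMul A B := by
      intro a ha b hb
      have hupdate_mem : ∀ j ∈ s, update m i a j ∈ spanMul A B := fun j hj => by
        rw [update_of_ne (ne_of_mem_of_not_mem hj hi)]
        exact hmem j (Finset.mem_insert_of_mem hj)
      have hupdate_notMem : ∀ j ∉ s, update m i a j ∈ A := fun j hj => by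
        obtain rfl | hji := eq_or_ne j i
        · rwa [update_self]
        · rw [update_of_ne hji]
          exact hnotMem j (by simp only [Finset.mem_insert, hji, hj, or_self, not_false_eq_true])
      rw [mul_comm]
      obtain rfl | hs' := s.eq_empty_or_nonempty
      · exact mul_mem_spanMul (hA _ fun j => hupdate_notMem j (Finset.notMem_empty j)) hb
      · exact spanMul_mul_mem hBmul (ih hs' hupdate_mem hupdate_notMem) b
    have hfi : f (update m i (m i)) ∈ spanMul A B :=
      (hf m i).apply_mem_spanMul hdB hdA (hmem i (Finset.mem_insert_self i s))
    rwa [update_eq_self] at hfi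

theorem subalgebra_mul_ideal_general [DecidableEq ι] [Finite ι] [Nonempty ι] [IsScalarTower R Q Q]
    {f : MultilinearMap R (fun _ : ι => Q) Q} (hf : IsMultiderivation f)
    (hA : ∀ m, (∀ i, m i ∈ A) → f m ∈ A) (hBmul : ∀ b ∈ B, ∀ q, b * q ∈ B)
    (hBf : ∀ m i, m i ∈ B → f m ∈ B) :
    (∀ x ∈ spanMul A B, ∀ y ∈ spanMul A B, x * y ∈ spanMul A B) ∧
      ∀ m, (∀ i, m i ∈ spanMul A B) → f m ∈ spanMul A B := by
  cases nonempty_fintype ι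
  exact ⟨fun x hx y _ => spanMul_mul_mem hBmul hx y, fun m hm =>
    hf.apply_mem_spanMul hA hBmul hBf Finset.univ_nonempty (fun i _ => hm i)
      fun i hi => absurd (Finset.mem_univ i) hi⟩

end Multiderivation

section Alternating

variable {R M N ι : Type*} [Ring R] [AddCommMonoid M] [Module R M] [AddCommGroup N] [Module R N]

theorem toLinearMap_eq_neg_toLinearMap_swap [DecidableEq ι] (f : M [⋀^ι]→ₗ[R] N) (m : ι → M)
    {i j : ι} (hij : i ≠ j) :
    f.toMultilinearMap.toLinearMap m i =
      -f.toMultilinearMap.toLinearMap (m ∘ Equiv.swap i j) j := by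
  ext x
  have hupdate : update (m ∘ Equiv.swap i j) j x = update m i x ∘ Equiv.swap i j := by
    rw [update_comp_equiv, Equiv.symm_swap, Equiv.swap_apply_left]
  rw [LinearMap.neg_apply, MultilinearMap.toLinearMap_apply, MultilinearMap.toLinearMap_apply,
    hupdate, ← neg_eq_iff_eq_neg]
  exact (f.map_swap _ hij).symm

theorem alternatingMap_apply_mem_of_slot_mem {f : M [⋀^ι]→ₗ[R] N} {B : Submodule R M}
    {C : Submodule R N} {j : ι} (hf : ∀ m, m j ∈ B → f m ∈ C) (m : ι → M) (i : ι)
    (hi : m i ∈ B) : f m ∈ C := by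
  classical
  obtain rfl | hij := eq_or_ne i j
  · exact hf m hi
  · rw [← neg_mem_iff, ← f.map_swap m hij]
    exact hf _ (by rwa [comp_apply, Equiv.swap_apply_right])

end Alternating

section AlternatingMultiderivation

variable {R Q ι : Type*} [CommRing R] [NonUnitalCommRing Q] [Module R Q]

theorem IsDerivation.neg {d : Q →ₗ[R] Q} (hd : IsDerivation d) : IsDerivation (-d) := fun x y => by
  simp only [LinearMap.neg_apply, hd x y, neg_add, mul_neg]

theorem isMultiderivation_of_isDerivation_slot [DecidableEq ι] {f : Q [⋀^ι]→ₗ[R] Q} {j : ι}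
    (hf : ∀ m, IsDerivation (f.toMultilinearMap.toLinearMap m j)) :
    IsMultiderivation f.toMultilinearMap := by
  intro m i
  obtain rfl | hij := eq_or_ne i j
  · exact hf m
  · rw [toLinearMap_eq_neg_toLinearMap_swap f m hij]
    exact (hf _).neg

end AlternatingMultiderivation

namespace IsPoisson23

variable {br : P → P → P → P}

/-- The ternary bracket of a Poisson (2-3)-algebra as an alternating map; `br a b c` is its value
at `![a, b, c]`. -/
def toAlternatingMap (hP : IsPoisson23 F br) : P [⋀^Fin 3]→ₗ[F] P :=
  { MultilinearMap.mk' (fun m : Fin 3 → P => br (m 0) (m 1) (m 2))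
      (fun m i x y => by
        fin_cases i <;> simp [hP.add_fst, hP.add_snd, hP.add_trd])
      (fun m i l x => by
        fin_cases i <;> simp [hP.smul_fst, hP.smul_snd, hP.smul_trd]) with
    map_eq_zero_of_eq' := fun m i j hm hij => hP.alternating _ _ _ (by
      fin_cases i <;> fin_cases j <;> simp_all) }

theorem isMultiderivation (hP : IsPoisson23 F br) :
    IsMultiderivation hP.toAlternatingMap.toMultilinearMap :=
  isMultiderivation_of_isDerivation_slot (j := 0) fun m x y =>
    hP.leibniz x y (m 1) (m 2)

end IsPoisson23

theorem subalgebra_mul_ideal (br : P → P → P → P) (hP : IsPoisson23 F br)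
    (A B : Submodule F P) (hA : IsSubalgebra br A) (hB : IsIdeal br B) :
    IsSubalgebra br
      (Submodule.span F {x : P | ∃ a ∈ A, ∃ b ∈ B, x = a * b}) := by
  obtain ⟨hmul, hbr⟩ := subalgebra_mul_ideal_general hP.isMultiderivation
    (fun m hm => hA.2 _ (hm 0) _ (hm 1) _ (hm 2)) hB.1
    (alternatingMap_apply_mem_of_slot_mem (j := 0) fun m hm => hB.2 _ hm (m 1) (m 2))
  exact ⟨hmul, fun x hx y hy z hz =>
    hbr ![x, y, z] (Fin.forall_fin_succ.2 ⟨hx, Fin.forall_fin_two.2 ⟨hy, hz⟩⟩)⟩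
end

section
/- Let P be a Poisson (2-3)-algebra over a field F whose center ζ(P) has finite codimension d in P (as an F-subspace). Then P contains an ideal K with dim_F(K) ≤ d(d²-1)(d-2)/6 such that the quotient P/K is abelian, i.e. [x,y,z] ∈ K for all x,y,z ∈ P. -/
/-!
Choose a complement `W` of the center `Z`, so `dim W = d`. Brackets do not change when an entry is
moved by an element of `Z`, so the span `D` of all brackets is a quotient of `⋀³ W` and has
dimension at most `d.choose 3`. If `z` is central, Leibniz reads `[az, b, c] = z[a, b, c]`; hence
`D Z ⊆ D`, and `K = D + D W = D + D P` is closed under multiplication by `P`. Its dimension is at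
most `d.choose 3 * (1 + d)`, and it absorbs brackets because it contains all of them.
-/

theorem multilinearMap_apply_eq_of_sub_mem {R N ι : Type*} [Semiring R] [AddCommMonoid N]
    [Module R N] [Finite ι] {M : ι → Type*} [∀ i, AddCommGroup (M i)] [∀ i, Module R (M i)]
    (f : MultilinearMap R M N) {p : ∀ i, Submodule R (M i)}
    (hf : ∀ v i, v i ∈ p i → f v = 0) {v w : ∀ i, M i} (h : ∀ i, v i - w i ∈ p i) :
    f v = f w := by
  classical
  have := Fintype.ofFinite ι
  calc
    f v = ∑ s : Finset ι, f (s.piecewise (v - w) w) := by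
      rw [← f.map_add_univ, sub_add_cancel]
    _ = f ((∅ : Finset ι).piecewise (v - w) w) := by
      refine Fintype.sum_eq_single _ fun s hs => ?_
      obtain ⟨i, hi⟩ := Finset.nonempty_iff_ne_empty.2 hs
      refine hf _ i ?_
      rw [Finset.piecewise_eq_of_mem _ _ _ hi]
      exact h i
    _ = f w := by rw [Finset.piecewise_empty]

section AlternatingMap

variable {R M N ι : Type*} [Semiring R] [AddCommGroup M] [Module R M] [AddCommGroup N] [Module R N]

theorem alternatingMap_apply_eq_zero_of_mem (f : M [⋀^ι]→ₗ[R] N) {s : Set M} {i : ι}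
    (hf : ∀ v, v i ∈ s → f v = 0) {v : ι → M} {j : ι} (hv : v j ∈ s) : f v = 0 := by
  classical
  obtain rfl | hij := eq_or_ne i j
  · exact hf v hv
  · rw [← neg_eq_zero, ← f.map_swap v hij]
    exact hf _ (by simpa using hv)

theorem range_alternatingMap_compLinearMap_subtype [Finite ι] (f : M [⋀^ι]→ₗ[R] N)
    {p q : Submodule R M} (hpq : Codisjoint p q) (hf : ∀ v i, v i ∈ p → f v = 0) :
    Set.range (f.compLinearMap q.subtype) = Set.range f := by
  refine Set.Subset.antisymm (Set.range_subset_iff.2 fun v => ⟨_, rfl⟩) ?_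
  rintro _ ⟨v, rfl⟩
  have hsplit (i : ι) : ∃ w : q, v i - w ∈ p := by
    obtain ⟨x, w, hx, hw, hxw⟩ := Submodule.codisjoint_iff_exists_add_eq.1 hpq (v i)
    exact ⟨⟨w, hw⟩, by simpa [← hxw] using hx⟩
  choose w hw using hsplit
  exact ⟨w, (multilinearMap_apply_eq_of_sub_mem f.toMultilinearMap hf hw).symm⟩

end AlternatingMap

section Finrank

open exteriorPower

variable {R M N : Type*} [CommRing R] [AddCommGroup M] [Module R M] [AddCommGroup N] [Module R N]

theorem span_range_eq_range_alternatingMapLinearEquiv {n : ℕ} (f : M [⋀^Fin n]→ₗ[R] N) :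
    Submodule.span R (Set.range f) = LinearMap.range (alternatingMapLinearEquiv f) := by
  rw [LinearMap.range_eq_map, ← ιMulti_span, Submodule.map_span, ← Set.range_comp]
  congr 2
  ext v
  simp only [Function.comp_apply, alternatingMapLinearEquiv_apply_ιMulti]

instance finite_span_range_alternatingMap {n : ℕ} [Module.Finite R M] (f : M [⋀^Fin n]→ₗ[R] N) :
    Module.Finite R (Submodule.span R (Set.range f)) := by
  rw [span_range_eq_range_alternatingMapLinearEquiv]
  infer_instance

theorem finrank_span_range_alternatingMap_le [StrongRankCondition R] [Module.Free R M]
    [Module.Finite R M] {n : ℕ} (f : M [⋀^Fin n]→ₗ[R] N) :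
    Module.finrank R (Submodule.span R (Set.range f)) ≤ (Module.finrank R M).choose n := by
  have := nontrivial_of_invariantBasisNumber R
  rw [span_range_eq_range_alternatingMapLinearEquiv, ← exteriorPower.finrank_eq]
  exact LinearMap.finrank_range_le _

instance finite_map₂ {L : Type*} [AddCommGroup L] [Module R L] (f : M →ₗ[R] N →ₗ[R] L)
    (p : Submodule R M) (q : Submodule R N) [Module.Finite R p] [Module.Finite R q] :
    Module.Finite R (Submodule.map₂ f p q) :=
  .of_fg (.map₂ f .of_finite .of_finite)

theorem finrank_map₂_le {L : Type*} [AddCommGroup L] [Module R L] [StrongRankCondition R]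
    (f : M →ₗ[R] N →ₗ[R] L) (p : Submodule R M) (q : Submodule R N)
    [Module.Free R p] [Module.Finite R p] [Module.Free R q] [Module.Finite R q] :
    Module.finrank R (Submodule.map₂ f p q) ≤ Module.finrank R p * Module.finrank R q := by
  rw [TensorProduct.map₂_eq_range_lift_comp_mapIncl, ← Module.finrank_tensorProduct]
  exact LinearMap.finrank_range_le _

theorem finrank_sup_map₂_le {F V U : Type*} [Field F] [AddCommGroup V] [Module F V]
    [AddCommGroup U] [Module F U] (f : V →ₗ[F] U →ₗ[F] V) (D : Submodule F V) (W : Submodule F U)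
    [FiniteDimensional F D] [FiniteDimensional F W] :
    Module.finrank F ↥(D ⊔ Submodule.map₂ f D W) ≤
      Module.finrank F D * (Module.finrank F W + 1) := by
  calc
    _ ≤ Module.finrank F D + Module.finrank F (Submodule.map₂ f D W) :=
      Submodule.finrank_add_le_finrank_add_finrank _ _
    _ ≤ Module.finrank F D + Module.finrank F D * Module.finrank F W := by
      gcongr
      exact finrank_map₂_le f D W
    _ = Module.finrank F D * (Module.finrank F W + 1) := by ring

end Finrank

section Ideal

open Submodule

theorem mul_mem_sup_map₂_mul {R A : Type*} [CommSemiring R] [NonUnitalRing A] [Module R A]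
    [SMulCommClass R A A] [IsScalarTower R A A] {D Z W : Submodule R A} (hZW : Codisjoint Z W)
    (hDZ : ∀ a ∈ D, ∀ z ∈ Z, a * z ∈ D) {a : A} (ha : a ∈ D ⊔ map₂ (LinearMap.mul R A) D W)
    (b : A) : a * b ∈ D ⊔ map₂ (LinearMap.mul R A) D W := by
  have mul_mem_of_mem {x : A} (hx : x ∈ D) (b : A) :
      x * b ∈ D ⊔ map₂ (LinearMap.mul R A) D W := by
    obtain ⟨z, w, hz, hw, rfl⟩ := codisjoint_iff_exists_add_eq.1 hZW b
    rw [mul_add]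
    exact add_mem_sup (hDZ x hx z hz) (apply_mem_map₂ (LinearMap.mul R A) hx hw)
  suffices D ⊔ map₂ (LinearMap.mul R A) D W ≤
      (D ⊔ map₂ (LinearMap.mul R A) D W).comap (LinearMap.mulRight R b) from this ha
  refine sup_le (fun x hx => mul_mem_of_mem hx b) (map₂_le.2 fun x hx w _ => ?_)
  rw [mem_comap, LinearMap.mul_apply', LinearMap.mulRight_apply, mul_assoc]
  exact mul_mem_of_mem hx (w * b)

theorem mul_mem_span_range_of_leibniz {R A ι : Type*} [Semiring R] [NonUnitalCommRing A]
    [Module R A] [IsScalarTower R A A] [DecidableEq ι]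
    {br : (ι → A) → A} {i : ι}
    (leibniz : ∀ v a b, br (Function.update v i (a * b)) =
      b * br (Function.update v i a) + a * br (Function.update v i b))
    {z : A} (hz : ∀ v, v i = z → br v = 0) {a : A} (ha : a ∈ span R (Set.range br)) :
    a * z ∈ span R (Set.range br) := by
  suffices span R (Set.range br) ≤ (span R (Set.range br)).comap (LinearMap.mulRight R z) from
    this ha
  rw [span_le, Set.range_subset_iff]
  intro v
  have hbr : br v * z = br (Function.update v i (v i * z)) := by
    rw [leibniz, hz _ (Function.update_self i z v), mul_zero, add_zero, Function.update_eq_self,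
      mul_comm]
  change br v * z ∈ span R (Set.range br)
  rw [hbr]
  exact subset_span ⟨_, rfl⟩

end Ideal

theorem schur_poisson23_general {F P : Type*} [Field F] [NonUnitalCommRing P] [Module F P]
    [SMulCommClass F P P] [IsScalarTower F P P] {n : ℕ} (br : P [⋀^Fin n]→ₗ[F] P) (i : Fin n)
    (leibniz : ∀ v a b, br (Function.update v i (a * b)) =
      b * br (Function.update v i a) + a * br (Function.update v i b))
    (Z : Submodule F P) (hZ : ∀ v, v i ∈ Z → br v = 0) [FiniteDimensional F (P ⧸ Z)] :
    ∃ K : Submodule F P,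
      (∀ a ∈ K, ∀ b, a * b ∈ K) ∧ (∀ v, br v ∈ K) ∧ FiniteDimensional F K ∧
      Module.finrank F K ≤
        (Module.finrank F (P ⧸ Z)).choose n * (Module.finrank F (P ⧸ Z) + 1) := by
  obtain ⟨W, hZW⟩ := Z.exists_isCompl
  let e := Z.quotientEquivOfIsCompl W hZW
  have : FiniteDimensional F W := e.finiteDimensional
  let D := Submodule.span F (Set.range br)
  have hD : D = Submodule.span F (Set.range (br.compLinearMap W.subtype)) := by
    rw [range_alternatingMap_compLinearMap_subtype br hZW.codisjoint
      fun _ _ => alternatingMap_apply_eq_zero_of_mem br hZ]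
  have : FiniteDimensional F D := hD ▸ inferInstance
  have hD_finrank : Module.finrank F D ≤ (Module.finrank F W).choose n :=
    hD ▸ finrank_span_range_alternatingMap_le _
  have hDZ : ∀ a ∈ D, ∀ z ∈ Z, a * z ∈ D := fun a ha z hz =>
    mul_mem_span_range_of_leibniz leibniz (fun v hv => hZ v (hv ▸ hz)) ha
  refine ⟨D ⊔ Submodule.map₂ (LinearMap.mul F P) D W,
    fun a ha b => mul_mem_sup_map₂_mul hZW.codisjoint hDZ ha b,
    fun v => Submodule.mem_sup_left (Submodule.subset_span ⟨v, rfl⟩), inferInstance, ?_⟩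
  rw [e.finrank_eq]
  exact (finrank_sup_map₂_le _ D W).trans (Nat.mul_le_mul_right _ hD_finrank)

theorem choose_three_mul_succ (d : ℕ) :
    d.choose 3 * (d + 1) = d * (d ^ 2 - 1) * (d - 2) / 6 := by
  have h6 : d * (d - 1) * (d - 2) = 6 * d.choose 3 := by
    have := Nat.descFactorial_eq_factorial_mul_choose d 3
    simp only [Nat.descFactorial_succ, Nat.descFactorial_zero, Nat.sub_zero, Nat.factorial] at this
    linarith
  have hsq : d ^ 2 - 1 = (d + 1) * (d - 1) := by simpa using Nat.sq_sub_sq d 1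
  refine (Nat.div_eq_of_eq_mul_right (by norm_num) ?_).symm
  calc
    d * (d ^ 2 - 1) * (d - 2) = d * (d - 1) * (d - 2) * (d + 1) := by rw [hsq]; ring
    _ = 6 * (d.choose 3 * (d + 1)) := by rw [h6, mul_assoc]

/-- The bracket of a Poisson (2-3)-algebra as an alternating map on `Fin 3`-indexed families. -/
def IsPoisson23.toAlternatingMap_s19 {F P : Type*} [Field F] [NonUnitalCommRing P] [Module F P]
    [SMulCommClass F P P] [IsScalarTower F P P] {br : P → P → P → P} (hP : IsPoisson23 F br) :
    P [⋀^Fin 3]→ₗ[F] P where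
  toMultilinearMap := MultilinearMap.mk' (fun v => br (v 0) (v 1) (v 2))
    (fun v i x y => by fin_cases i <;> simp [hP.add_fst, hP.add_snd, hP.add_trd])
    (fun v i l x => by fin_cases i <;> simp [hP.smul_fst, hP.smul_snd, hP.smul_trd])
  map_eq_zero_of_eq' v i j h hij := by
    apply hP.alternating
    fin_cases i <;> fin_cases j <;> simp_all

/-- Analogue of Schur's theorem: if the center of a Poisson (2-3)-algebra `P`
has finite codimension `d`, then `P` has an ideal `K` of dimension at most
`d(d²-1)(d-2)/6` such that `P/K` is abelian, i.e. `[x,y,z] ∈ K` for all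
`x, y, z ∈ P`. -/
theorem schur_poisson23 {F P : Type*} [Field F] [NonUnitalCommRing P]
    [Module F P] [SMulCommClass F P P] [IsScalarTower F P P]
    (br : P → P → P → P) (hP : IsPoisson23 F br)
    (Z : Submodule F P) (hZ : ∀ a : P, a ∈ Z ↔ ∀ b c : P, br a b c = 0)
    (d : ℕ) (hfin : FiniteDimensional F (P ⧸ Z))
    (hd : Module.finrank F (P ⧸ Z) = d) :
    ∃ K : Submodule F P,
      -- `K` is an ideal of `P`:
      (∀ a ∈ K, ∀ b : P, a * b ∈ K) ∧
      (∀ a ∈ K, ∀ b c : P, br a b c ∈ K) ∧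
      -- `K` has finite dimension at most `d(d²-1)(d-2)/6`:
      FiniteDimensional F K ∧
      Module.finrank F K ≤ d * (d ^ 2 - 1) * (d - 2) / 6 ∧
      -- and `P/K` is abelian:
      (∀ x y z : P, br x y z ∈ K) := by
  subst hd
  obtain ⟨K, hmul, hbr, hKfin, hrank⟩ :=
    schur_poisson23_general hP.toAlternatingMap_s19 0 (fun v a b => hP.leibniz a b (v 1) (v 2)) Z
      (fun v hv => (hZ (v 0)).1 hv (v 1) (v 2))
  have hab : ∀ x y z, br x y z ∈ K := fun x y z => hbr ![x, y, z]
  exact ⟨K, hmul, fun a _ => hab a, hKfin, hrank.trans_eq (choose_three_mul_succ _), hab⟩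
end
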